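/- Let α ∈ (1,∞), let ρ be a positive semidefinite n×n complex matrix and σ a positive definite n×n complex matrix, and let Φ be a positive, trace-preserving linear map from n×n to m×m complex matrices (Φ maps PSD matrices to PSD matrices and tr(Φ(W)) = tr(W) for all W) such that Φ(σ) is positive definite. Then Q^#_α(Φ(ρ)‖Φ(σ)) ≤ Q^#_α(ρ‖σ), and hence D^#_α(Φ(ρ)‖Φ(σ)) ≤ D^#_α(ρ‖σ) (data-processing inequality). -/

import Mathlib

open Matrix Filter
open scoped Kronecker Classical ComplexOrder

noncomputable def Matrix.rpowH {n : Type*} [Fintype n] [DecidableEq n]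
    (A : Matrix n n ℂ) (r : ℝ) : Matrix n n ℂ :=
  if hA : A.IsHermitian then
    (hA.eigenvectorUnitary : Matrix n n ℂ) *
      Matrix.diagonal (fun i => ((hA.eigenvalues i ^ r : ℝ) : ℂ)) *
      star (hA.eigenvectorUnitary : Matrix n n ℂ)
  else 0

noncomputable def Matrix.gmean {n : Type*} [Fintype n] [DecidableEq n]
    (β : ℝ) (S A : Matrix n n ℂ) : Matrix n n ℂ :=
  S.rpowH (1/2) * ((S.rpowH (-(1/2)) * A * S.rpowH (-(1/2))).rpowH β) * S.rpowH (1/2)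

noncomputable def QSharp {n : Type*} [Fintype n] [DecidableEq n]
    (α : ℝ) (ρ σ : Matrix n n ℂ) : ℝ :=
  sInf { t : ℝ | ∃ A : Matrix n n ℂ, A.PosSemidef ∧
    (Matrix.gmean (1/α) σ A - ρ).PosSemidef ∧ t = A.trace.re }

noncomputable def DSharp {n : Type*} [Fintype n] [DecidableEq n]
    (α : ℝ) (ρ σ : Matrix n n ℂ) : ℝ :=
  1/(α-1) * Real.logb 2 (QSharp α ρ σ)

noncomputable def opNorm {n : Type*} [Fintype n] [DecidableEq n] (A : Matrix n n ℂ) : ℝ :=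
  ‖(Matrix.toEuclideanCLM (𝕜 := ℂ) A : EuclideanSpace ℂ n →L[ℂ] EuclideanSpace ℂ n)‖

noncomputable def Dtilde {n : Type*} [Fintype n] [DecidableEq n]
    (α : ℝ) (ρ σ : Matrix n n ℂ) : ℝ :=
  1/(α-1) * Real.logb 2
    (((σ.rpowH ((1-α)/(2*α)) * ρ * σ.rpowH ((1-α)/(2*α))).rpowH α).trace.re)

noncomputable def Dhat {n : Type*} [Fintype n] [DecidableEq n]
    (α : ℝ) (ρ σ : Matrix n n ℂ) : ℝ :=
  1/(α-1) * Real.logb 2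
    ((σ.rpowH (1/2) * ((σ.rpowH (-(1/2)) * ρ * σ.rpowH (-(1/2))).rpowH α) * σ.rpowH (1/2)).trace.re)


namespace QSharpAux

lemma spec {n : Type*} [Fintype n] [DecidableEq n] {A : Matrix n n ℂ} (hA : A.IsHermitian) :
    ∃ Q : n → Matrix n n ℂ, (∀ i, (Q i).PosSemidef) ∧ ∑ i, Q i = 1 ∧
      (∀ i j, Q i * Q j = if i = j then Q i else 0) ∧
      A = ∑ i, ((hA.eigenvalues i : ℝ) : ℂ) • Q i ∧
      ∀ r : ℝ, A.rpowH r = ∑ i, ((hA.eigenvalues i ^ r : ℝ) : ℂ) • Q i := by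
  set U : Matrix n n ℂ := (hA.eigenvectorUnitary : Matrix n n ℂ) with hU
  have hUU : star U * U = 1 := by simp [hU]
  have hVV : U * star U = 1 := by simp [hU]
  have key : ∀ f : n → ℂ, U * Matrix.diagonal f * star U =
      ∑ i, f i • (U * Matrix.single i i 1 * star U) := by
    intro f
    have : Matrix.diagonal f = ∑ i, f i • (Matrix.single i i 1 : Matrix n n ℂ) := by
      ext a b
      simp [Matrix.sum_apply, Matrix.single_apply, Matrix.diagonal_apply]
      by_cases h : a = b
      · simp [h]
      · rw [if_neg h]
        refine (Finset.sum_eq_zero fun c _ => if_neg ?_).symm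
        rintro ⟨rfl, rfl⟩; exact h rfl
    rw [this, Finset.mul_sum, Finset.sum_mul]
    simp only [Matrix.mul_smul, Matrix.smul_mul]
  refine ⟨fun i => U * Matrix.single i i 1 * star U, ?_, ?_, ?_, ?_, ?_⟩
  · intro i
    have : (Matrix.single i i 1 : Matrix n n ℂ).PosSemidef := by
      have h : (Matrix.single i i 1 : Matrix n n ℂ) = Matrix.diagonal (Pi.single i 1) := by
        rw [Matrix.diagonal_single]
      rw [h]
      refine Matrix.PosSemidef.diagonal ?_
      intro j
      by_cases hj : j = i
      · subst hj; simp
      · simp [hj]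
    exact this.mul_mul_conjTranspose_same U
  · have := key (fun _ => 1)
    simp only [one_smul] at this
    rw [← this]
    simp [hVV]
  · intro i j
    have : U * Matrix.single i i 1 * star U * (U * Matrix.single j j 1 * star U)
        = U * (Matrix.single i i 1 * ((star U * U) * Matrix.single j j 1)) * star U := by
      simp only [Matrix.mul_assoc]
    rw [this, hUU, Matrix.one_mul]
    by_cases h : i = j
    · subst h; simp
    · simp [h, Matrix.single_mul_single_of_ne]
  · rw [← key]
    conv_lhs => rw [hA.spectral_theorem]
    simp [Unitary.conjStarAlgAut_apply, hU, Function.comp_def]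
  · intro r
    rw [Matrix.rpowH, dif_pos hA, ← key]

/-- Jensen-type inequality for the inverse. -/
lemma inv_ineq {ι m : Type*} [Fintype ι] [Fintype m] [DecidableEq m]
    (E : ι → Matrix m m ℂ) (hE : ∀ i, (E i).PosSemidef) (hE1 : ∑ i, E i = 1)
    (c : ι → ℝ) (hc : ∀ i, 0 < c i) (M : Matrix m m ℂ) (hM : M.IsHermitian)
    (hinv : M * (∑ i, ((c i : ℝ) : ℂ) • E i) = 1) :
    ((∑ i, (((c i)⁻¹ : ℝ) : ℂ) • E i) - M).PosSemidef := by
  have h : ∀ i, ((((c i)⁻¹ : ℝ) : ℂ) •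
      ((1 - (c i : ℂ) • M) * E i * (1 - (c i : ℂ) • M)ᴴ)).PosSemidef := by
    intro i
    refine ((hE i).mul_mul_conjTranspose_same _).smul ?_
    have := (hc i).le
    exact_mod_cast inv_nonneg.mpr this
  have hs := Matrix.posSemidef_sum Finset.univ (fun i _ => h i)
  convert hs using 1
  have e : ∀ i, ((((c i)⁻¹ : ℝ) : ℂ) •
      ((1 - (c i : ℂ) • M) * E i * (1 - (c i : ℂ) • M)ᴴ)) =
      (((c i)⁻¹ : ℝ) : ℂ) • E i - E i * M - M * E i + M * ((c i : ℂ) • E i) * M := by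
    intro i
    have hci : (c i : ℂ) ≠ 0 := by exact_mod_cast (hc i).ne'
    rw [Matrix.conjTranspose_sub, Matrix.conjTranspose_smul, hM.eq, Matrix.conjTranspose_one]
    simp only [Complex.star_def, Complex.conj_ofReal, Matrix.sub_mul, Matrix.mul_sub,
      Matrix.one_mul, Matrix.mul_one, Matrix.smul_mul, Matrix.mul_smul, smul_sub, smul_smul,
      Complex.ofReal_inv, inv_mul_cancel₀ hci, one_smul]
    rw [mul_comm, mul_assoc, mul_inv_cancel₀ hci]
    simp
    abel
  simp only [e, Finset.sum_add_distrib, Finset.sum_sub_distrib, ← Finset.sum_mul,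
    ← Finset.mul_sum, hE1, hinv]
  simp

lemma jensen {ι m : Type*} [Fintype ι] [Fintype m] [DecidableEq m]
    (E : ι → Matrix m m ℂ) (hE : ∀ i, (E i).PosSemidef) (hE1 : ∑ i, E i = 1)
    (l : ι → ℝ) (hl : ∀ i, 0 ≤ l i) (β : ℝ) (hβ : β ∈ Set.Ioo (0 : ℝ) 1) :
    ((∑ i, ((l i : ℝ) : ℂ) • E i).rpowH β - ∑ i, ((l i ^ β : ℝ) : ℂ) • E i).PosSemidef := by
  have hC : (∑ i, ((l i : ℝ) : ℂ) • E i).PosSemidef :=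
    Matrix.posSemidef_sum Finset.univ
      (fun i _ => (hE i).smul (by exact_mod_cast hl i))
  set C := ∑ i, ((l i : ℝ) : ℂ) • E i with hCdef
  obtain ⟨Q, hQ, hQ1, hQQ, hCQ, hpow⟩ := spec hC.1
  have hμ := hC.eigenvalues_nonneg
  set μ := hC.1.eigenvalues with hμdef
  rw [hpow]
  -- inequality of resolvents
  have hres : ∀ t : ℝ, 0 < t → ((∑ i, (((t + l i)⁻¹ : ℝ) : ℂ) • E i)
      - ∑ j, (((t + μ j)⁻¹ : ℝ) : ℂ) • Q j).PosSemidef := by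
    intro t ht
    refine inv_ineq E hE hE1 (fun i => t + l i) (fun i => by have := hl i; positivity) _ ?_ ?_
    · refine (Matrix.posSemidef_sum Finset.univ
        (fun j _ => (hQ j).smul ?_)).1
      have := hμ j
      have : 0 ≤ (t + μ j)⁻¹ := by positivity
      exact_mod_cast this
    · have h1 : ∑ i, (((t + l i : ℝ) : ℂ)) • E i = ∑ j, ((t + μ j : ℝ) : ℂ) • Q j := by
        simp only [Complex.ofReal_add, add_smul, Finset.sum_add_distrib, ← Finset.smul_sum,
          hE1, hQ1]
        rw [← hCdef, ← hCQ]
      rw [h1, Finset.sum_mul]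
      simp only [Finset.mul_sum, Matrix.smul_mul, Matrix.mul_smul, hQQ, smul_smul]
      rw [← hQ1]
      refine Finset.sum_congr rfl fun i _ => ?_
      have h0 : ((t + μ i : ℝ) : ℂ) ≠ 0 := by
        have := hμ i
        exact_mod_cast (by positivity : t + μ i ≠ 0)
      simp only [smul_ite, smul_zero, Finset.sum_ite_eq, Finset.mem_univ, if_true]
      rw [Complex.ofReal_inv, mul_inv_cancel₀ h0, one_smul]
  rw [Matrix.posSemidef_iff_dotProduct_mulVec]
  refine ⟨?_, fun x => ?_⟩
  · refine Matrix.IsHermitian.sub ?_ ?_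
    · exact (Matrix.posSemidef_sum Finset.univ
        (fun j _ => (hQ j).smul (by exact_mod_cast Real.rpow_nonneg (hμ j) β))).1
    · exact (Matrix.posSemidef_sum Finset.univ
        (fun j _ => (hE j).smul (by exact_mod_cast Real.rpow_nonneg (hl j) β))).1
  -- weights
  have hw : ∀ {P : Matrix m m ℂ}, P.PosSemidef →
      star x ⬝ᵥ P *ᵥ x = (((star x ⬝ᵥ P *ᵥ x).re : ℝ) : ℂ) := by
    intro P hP
    have := hP.dotProduct_mulVec_nonneg x
    rw [Complex.le_def] at this
    apply Complex.ext <;> simp [← this.2]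
  set a : ι → ℝ := fun i => (star x ⬝ᵥ E i *ᵥ x).re with ha
  set b : m → ℝ := fun j => (star x ⬝ᵥ Q j *ᵥ x).re with hb
  have ea : ∀ f : ι → ℝ, star x ⬝ᵥ (∑ i, ((f i : ℝ) : ℂ) • E i) *ᵥ x =
      ((∑ i, f i * a i : ℝ) : ℂ) := by
    intro f
    rw [Matrix.sum_mulVec, dotProduct_sum]
    push_cast
    refine Finset.sum_congr rfl fun i _ => ?_
    rw [Matrix.smul_mulVec, dotProduct_smul, hw (hE i), smul_eq_mul]
  have eb : ∀ f : m → ℝ, star x ⬝ᵥ (∑ i, ((f i : ℝ) : ℂ) • Q i) *ᵥ x =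
      ((∑ i, f i * b i : ℝ) : ℂ) := by
    intro f
    rw [Matrix.sum_mulVec, dotProduct_sum]
    push_cast
    refine Finset.sum_congr rfl fun i _ => ?_
    rw [Matrix.smul_mulVec, dotProduct_smul, hw (hQ i), smul_eq_mul]
  have hab : ∑ i, a i = ∑ j, b j := by
    have h1 := ea (fun _ => 1)
    have h2 := eb (fun _ => 1)
    simp only [Complex.ofReal_one, one_smul, hE1, hQ1, one_mul] at h1 h2
    exact_mod_cast h1.symm.trans h2
  rw [Matrix.sub_mulVec, dotProduct_sub, ea, eb, ← Complex.ofReal_sub]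
  suffices h : ∑ i, l i ^ β * a i ≤ ∑ j, μ j ^ β * b j by
    exact_mod_cast sub_nonneg.mpr h
  obtain ⟨ν, hν⟩ := Real.exists_measure_rpow_eq_integral_rpowIntegrand₀₁ hβ
  have ia : ∑ i, l i ^ β * a i =
      ∫ t in Set.Ioi 0, ∑ i, Real.rpowIntegrand₀₁ β t (l i) * a i ∂ν := by
    rw [MeasureTheory.integral_finsetSum]
    · refine Finset.sum_congr rfl fun i _ => ?_
      rw [MeasureTheory.integral_mul_const, (hν (l i) (hl i)).2]
    · exact fun i _ => (hν (l i) (hl i)).1.mul_const _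
  have ib : ∑ i, μ i ^ β * b i =
      ∫ t in Set.Ioi 0, ∑ i, Real.rpowIntegrand₀₁ β t (μ i) * b i ∂ν := by
    rw [MeasureTheory.integral_finsetSum]
    · refine Finset.sum_congr rfl fun i _ => ?_
      rw [MeasureTheory.integral_mul_const, (hν (μ i) (hμ i)).2]
    · exact fun i _ => (hν (μ i) (hμ i)).1.mul_const _
  rw [ia, ib]
  refine MeasureTheory.setIntegral_mono_on ?_ ?_ measurableSet_Ioi ?_
  · exact MeasureTheory.integrable_finsetSum _ fun i _ => (hν (l i) (hl i)).1.mul_const _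
  · exact MeasureTheory.integrable_finsetSum _ fun i _ => (hν (μ i) (hμ i)).1.mul_const _
  · intro t ht
    have ht : 0 < t := ht
    have h := (hres t ht).dotProduct_mulVec_nonneg x
    rw [Matrix.sub_mulVec, dotProduct_sub, ea, eb, ← Complex.ofReal_sub] at h
    have h : 0 ≤ ∑ i, (t + l i)⁻¹ * a i - ∑ j, (t + μ j)⁻¹ * b j := by exact_mod_cast h
    simp only [Real.rpowIntegrand₀₁, mul_assoc, sub_mul, ← Finset.mul_sum,
      Finset.sum_sub_distrib, hab]
    have := Real.rpow_nonneg ht.le β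
    refine mul_le_mul_of_nonneg_left ?_ this
    linarith

lemma rpowH_posSemidef {n : Type*} [Fintype n] [DecidableEq n] {A : Matrix n n ℂ}
    (hA : A.PosSemidef) (r : ℝ) : (A.rpowH r).PosSemidef := by
  obtain ⟨Q, hQ, -, -, -, hpow⟩ := spec hA.1
  rw [hpow]
  exact Matrix.posSemidef_sum Finset.univ (fun j _ => (hQ j).smul
    (by exact_mod_cast Real.rpow_nonneg (hA.eigenvalues_nonneg j) r))

/-- Square roots of positive definite matrices. -/
lemma sqrt_facts {n : Type*} [Fintype n] [DecidableEq n] {S : Matrix n n ℂ} (hS : S.PosDef) :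
    S.rpowH (1/2) * S.rpowH (1/2) = S ∧ S.rpowH (1/2) * S.rpowH (-(1/2)) = 1 ∧
    S.rpowH (-(1/2)) * S.rpowH (1/2) = 1 := by
  obtain ⟨Q, hQ, hQ1, hQQ, hSQ, hpow⟩ := spec hS.1
  have hpos := hS.eigenvalues_pos
  have hmul : ∀ r s : ℝ, S.rpowH r * S.rpowH s = S.rpowH (r + s) := by
    intro r s
    rw [hpow, hpow, hpow, Finset.sum_mul]
    refine Finset.sum_congr rfl fun i _ => ?_
    simp only [Finset.mul_sum, Matrix.smul_mul, Matrix.mul_smul, hQQ, smul_smul]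
    simp only [smul_ite, smul_zero, Finset.sum_ite_eq, Finset.mem_univ, if_true]
    rw [Real.rpow_add (hpos i)]
    push_cast
    rw [mul_comm]
  have h0 : S.rpowH 0 = 1 := by rw [hpow, ← hQ1]; simp
  have h1 : S.rpowH 1 = S := by
    rw [hpow]; conv_rhs => rw [hSQ]
    simp
  refine ⟨?_, ?_, ?_⟩
  · rw [hmul]; norm_num [h1]
  · rw [hmul]; norm_num [h0]
  · rw [hmul]; norm_num [h0]

lemma rpowH_eq_cfc {n : Type*} [Fintype n] [DecidableEq n] {A : Matrix n n ℂ}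
    (hA : A.IsHermitian) (r : ℝ) : A.rpowH r = cfc (fun x : ℝ => x ^ r) A := by
  rw [hA.cfc_eq, Matrix.IsHermitian.cfc, Matrix.rpowH, dif_pos hA,
    Unitary.conjStarAlgAut_apply]
  rfl

lemma rpowH_rpowH {n : Type*} [Fintype n] [DecidableEq n] {A : Matrix n n ℂ}
    (hA : A.PosSemidef) {α : ℝ} (hα : 0 < α) : (A.rpowH α).rpowH (1/α) = A := by
  have hfin : (spectrum ℝ A).Finite := Matrix.finite_real_spectrum
  rw [rpowH_eq_cfc (rpowH_posSemidef hA α).1, rpowH_eq_cfc hA.1]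
  refine Eq.trans (cfc_comp' (fun x : ℝ => x ^ (1/α)) (fun x : ℝ => x ^ α) A
    ((hfin.image _).continuousOn _) (hfin.continuousOn _) hA.1.isSelfAdjoint).symm ?_
  have : cfc (fun x : ℝ => (x ^ α) ^ (1/α)) A = cfc (fun x : ℝ => x) A := by
    refine cfc_congr fun x hx => ?_
    rw [hA.1.spectrum_real_eq_range_eigenvalues] at hx
    obtain ⟨i, rfl⟩ := hx
    have := hA.eigenvalues_nonneg i
    show (_ ^ α) ^ (1/α) = _
    rw [← Real.rpow_mul this, mul_one_div_cancel hα.ne', Real.rpow_one]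
  rw [this]
  exact cfc_id' ℝ A hA.1.isSelfAdjoint

lemma conj_pos {n : Type*} [Fintype n] {A S : Matrix n n ℂ}
    (hA : A.PosSemidef) (hS : S.IsHermitian) : (S * A * S).PosSemidef := by
  have := hA.mul_mul_conjTranspose_same S
  rwa [hS.eq] at this

/-- Spectral description of the weighted mean. -/
lemma gmean_spec {n : Type*} [Fintype n] [DecidableEq n] {S A : Matrix n n ℂ}
    (hS : S.PosDef) (hA : A.PosSemidef) :
    ∃ (l : n → ℝ) (P : n → Matrix n n ℂ), (∀ i, 0 ≤ l i) ∧ (∀ i, (P i).PosSemidef) ∧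
      ∑ i, P i = S ∧ ∑ i, ((l i : ℝ) : ℂ) • P i = A ∧
      ∀ β : ℝ, Matrix.gmean β S A = ∑ i, ((l i ^ β : ℝ) : ℂ) • P i := by
  obtain ⟨h1, h2, h3⟩ := sqrt_facts hS
  have hs := (rpowH_posSemidef hS.posSemidef (1/2)).1
  have hsi := (rpowH_posSemidef hS.posSemidef (-(1/2))).1
  unfold Matrix.gmean
  set s := S.rpowH (1/2)
  set si := S.rpowH (-(1/2))
  have hB : (si * A * si).PosSemidef := conj_pos hA hsi
  obtain ⟨Q, hQ, hQ1, hQQ, hBQ, hpow⟩ := spec hB.1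
  have key : ∀ f : n → ℂ, s * (∑ i, f i • Q i) * s = ∑ i, f i • (s * Q i * s) := by
    intro f
    simp only [Finset.mul_sum, Finset.sum_mul, Matrix.smul_mul, Matrix.mul_smul]
  refine ⟨hB.1.eigenvalues, fun i => s * Q i * s, hB.eigenvalues_nonneg,
    fun i => conj_pos (hQ i) hs, ?_, ?_, ?_⟩
  · rw [← Finset.sum_mul, ← Finset.mul_sum, hQ1, Matrix.mul_one, h1]
  · rw [← key, ← hBQ]
    calc s * (si * A * si) * s = (s * si) * A * (si * s) := by simp only [Matrix.mul_assoc]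
      _ = A := by rw [h2, h3]; simp
  · intro β
    rw [hpow, key]

lemma gmean_posSemidef {n : Type*} [Fintype n] [DecidableEq n] {S A : Matrix n n ℂ}
    (hS : S.PosDef) (hA : A.PosSemidef) (β : ℝ) : (Matrix.gmean β S A).PosSemidef := by
  obtain ⟨l, P, hl, hP, -, -, h⟩ := gmean_spec hS hA
  rw [h]
  exact Matrix.posSemidef_sum Finset.univ (fun j _ => (hP j).smul
    (by exact_mod_cast Real.rpow_nonneg (hl j) β))

lemma gmean_map {n m : Type*} [Fintype n] [DecidableEq n] [Fintype m] [DecidableEq m]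
    {S A : Matrix n n ℂ} (hS : S.PosDef) (hA : A.PosSemidef)
    (Φ : Matrix n n ℂ →ₗ[ℂ] Matrix m m ℂ)
    (hΦpos : ∀ C : Matrix n n ℂ, C.PosSemidef → (Φ C).PosSemidef) (hΦS : (Φ S).PosDef)
    (β : ℝ) (hβ : β ∈ Set.Ioo (0 : ℝ) 1) :
    (Matrix.gmean β (Φ S) (Φ A) - Φ (Matrix.gmean β S A)).PosSemidef := by
  obtain ⟨l, P, hl, hP, hPS, hPA, h⟩ := gmean_spec hS hA
  rw [h]
  obtain ⟨h1, h2, h3⟩ := sqrt_facts hΦS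
  have hw := (rpowH_posSemidef hΦS.posSemidef (1/2)).1
  have hwi := (rpowH_posSemidef hΦS.posSemidef (-(1/2))).1
  unfold Matrix.gmean
  set w := (Φ S).rpowH (1/2)
  set wi := (Φ S).rpowH (-(1/2))
  have key : ∀ f : n → ℂ, wi * (∑ i, f i • Φ (P i)) * wi = ∑ i, f i • (wi * Φ (P i) * wi) := by
    intro f
    simp only [Finset.mul_sum, Finset.sum_mul, Matrix.smul_mul, Matrix.mul_smul]
  have hΦA : Φ A = ∑ i, ((l i : ℝ) : ℂ) • Φ (P i) := by rw [← hPA]; simp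
  have hone : ∑ i, wi * Φ (P i) * wi = 1 := by
    rw [← Finset.sum_mul, ← Finset.mul_sum, ← map_sum, hPS]
    calc wi * Φ S * wi = (wi * w) * (w * wi) := by
          conv_lhs => rw [← h1]
          simp only [Matrix.mul_assoc]
      _ = 1 := by rw [h2, h3, Matrix.mul_one]
  have hj := jensen (fun i => wi * Φ (P i) * wi) (fun i => conj_pos (hΦpos _ (hP i)) hwi) hone
    l hl β hβ
  rw [← key, ← hΦA, ← key] at hj
  have := conj_pos hj hw
  convert this using 1
  rw [Matrix.mul_sub, Matrix.sub_mul, map_sum]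
  simp only [map_smul]
  congr 1
  generalize ∑ i, ((l i ^ β : ℝ) : ℂ) • Φ (P i) = X
  calc X = (w * wi) * X * (wi * w) := by rw [h2, h3]; simp
    _ = _ := by simp only [Matrix.mul_assoc]

lemma trace_re_nonneg {n : Type*} [Fintype n] {A : Matrix n n ℂ} (hA : A.PosSemidef) :
    0 ≤ A.trace.re := by
  have := hA.trace_nonneg
  rw [Complex.le_def] at this
  exact this.1

lemma bddBelow_set {n : Type*} [Fintype n] [DecidableEq n] (α : ℝ) (ρ σ : Matrix n n ℂ) :
    BddBelow { t : ℝ | ∃ A : Matrix n n ℂ, A.PosSemidef ∧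
      (Matrix.gmean (1/α) σ A - ρ).PosSemidef ∧ t = A.trace.re } := by
  refine ⟨0, ?_⟩
  rintro t ⟨A, hA, -, rfl⟩
  exact trace_re_nonneg hA

lemma nonempty_set {n : Type*} [Fintype n] [DecidableEq n] (α : ℝ) (hα : 0 < α)
    (ρ σ : Matrix n n ℂ) (hρ : ρ.PosSemidef) (hσ : σ.PosDef) :
    { t : ℝ | ∃ A : Matrix n n ℂ, A.PosSemidef ∧
      (Matrix.gmean (1/α) σ A - ρ).PosSemidef ∧ t = A.trace.re }.Nonempty := by
  obtain ⟨h1, h2, h3⟩ := sqrt_facts hσ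
  have hs := (rpowH_posSemidef hσ.posSemidef (1/2)).1
  have hsi := (rpowH_posSemidef hσ.posSemidef (-(1/2))).1
  unfold Matrix.gmean
  set s := σ.rpowH (1/2)
  set si := σ.rpowH (-(1/2))
  have hB : (si * ρ * si).PosSemidef := conj_pos hρ hsi
  refine ⟨_, s * (si * ρ * si).rpowH α * s, conj_pos (rpowH_posSemidef hB α) hs, ?_, rfl⟩
  have e : si * (s * (si * ρ * si).rpowH α * s) * si = (si * ρ * si).rpowH α := by
    calc _ = (si * s) * (si * ρ * si).rpowH α * (s * si) := by simp only [Matrix.mul_assoc]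
      _ = _ := by rw [h2, h3]; simp
  rw [e, rpowH_rpowH hB hα]
  have e2 : s * (si * ρ * si) * s = ρ := by
    calc _ = (s * si) * ρ * (si * s) := by simp only [Matrix.mul_assoc]
      _ = _ := by rw [h2, h3]; simp
  rw [e2, sub_self]
  exact Matrix.PosSemidef.zero

lemma QSharp_pos {n : Type*} [Fintype n] [DecidableEq n] (α : ℝ) (hα : 1 < α)
    (ρ σ : Matrix n n ℂ) (hρ : ρ.PosSemidef) (hσ : σ.PosDef) (htr : 0 < ρ.trace.re) :
    0 < QSharp α ρ σ := by
  have hα0 : 0 < α := by linarith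
  set β := 1 / α with hβ
  have hβ0 : 0 < β := by positivity
  have hβ1 : β < 1 := by rw [hβ, div_lt_one hα0]; exact hα
  have hσt : 0 ≤ σ.trace.re := trace_re_nonneg hσ.posSemidef
  set R := ρ.trace.re
  set T := σ.trace.re
  set k : ℝ := (R / (2 * (T + 1))) ^ α with hk
  have hkpos : 0 < k := by positivity
  have hkβ : k ^ β = R / (2 * (T + 1)) := by
    rw [hk, ← Real.rpow_mul (by positivity), hβ, mul_one_div_cancel hα0.ne', Real.rpow_one]
  have hkT : k ^ β * T ≤ R / 2 := by
    rw [hkβ, div_mul_eq_mul_div, div_le_div_iff₀ (by positivity) (by positivity)]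
    nlinarith
  have hk1 : 0 < k ^ (β - 1) := by positivity
  have hbound : R / 2 / k ^ (β - 1) ≤ QSharp α ρ σ := by
    refine le_csInf (nonempty_set α hα0 ρ σ hρ hσ) ?_
    rintro t ⟨A, hA, hle, rfl⟩
    obtain ⟨l, P, hl, hP, hPS, hPA, h⟩ := gmean_spec hσ hA
    rw [h] at hle
    have htr2 := trace_re_nonneg hle
    have etr : ∀ f : n → ℝ, (∑ i, ((f i : ℝ) : ℂ) • P i).trace.re =
        ∑ i, f i * (P i).trace.re := by
      intro f
      simp [Matrix.trace_sum, Matrix.trace_smul]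
    rw [Matrix.trace_sub, Complex.sub_re, etr] at htr2
    have hT : T = ∑ i, (P i).trace.re := by
      have := etr (fun _ => 1)
      simp only [Complex.ofReal_one, one_smul, one_mul, hPS] at this
      exact this
    have hAt : A.trace.re = ∑ i, l i * (P i).trace.re := by rw [← etr, hPA]
    have hpt : ∀ i, l i ^ β ≤ k ^ β + k ^ (β - 1) * l i := by
      intro i
      have hli := hl i
      rcases le_total (l i) k with h | h
      · have h1 := Real.rpow_le_rpow hli h hβ0.le
        have : 0 ≤ k ^ (β - 1) * l i := by positivity
        linarith
      · have hlp : 0 < l i := lt_of_lt_of_le hkpos h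
        have h1 : l i ^ (β - 1) ≤ k ^ (β - 1) :=
          Real.rpow_le_rpow_of_nonpos hkpos h (by linarith)
        have h2 : l i ^ β = l i ^ (β - 1) * l i := by
          rw [Real.rpow_sub_one hlp.ne', div_mul_cancel₀ _ hlp.ne']
        have : 0 < k ^ β := by positivity
        rw [h2]
        nlinarith
    have hsum : ∑ i, l i ^ β * (P i).trace.re ≤ k ^ β * T + k ^ (β - 1) * A.trace.re := by
      rw [hT, hAt, Finset.mul_sum, Finset.mul_sum, ← Finset.sum_add_distrib]
      refine Finset.sum_le_sum fun i _ => ?_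
      have := mul_le_mul_of_nonneg_right (hpt i) (trace_re_nonneg (hP i))
      linarith
    rw [div_le_iff₀ hk1]
    have : 0 ≤ ∑ i, l i ^ β * (P i).trace.re - R := htr2
    linarith
  exact lt_of_lt_of_le (by positivity) hbound

lemma QSharp_zero {n : Type*} [Fintype n] [DecidableEq n] (α : ℝ)
    (σ : Matrix n n ℂ) (hσ : σ.PosDef) : QSharp α 0 σ = 0 := by
  refine le_antisymm ?_ ?_
  · refine csInf_le (bddBelow_set α 0 σ) ⟨0, Matrix.PosSemidef.zero, ?_, by simp⟩
    rw [sub_zero]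
    exact gmean_posSemidef hσ Matrix.PosSemidef.zero _
  · refine Real.sInf_nonneg ?_
    rintro t ⟨A, hA, -, rfl⟩
    exact trace_re_nonneg hA

end QSharpAux

/-- data-processing inequality for Q^#_α and D^#_α under positive
trace-preserving linear maps. -/
theorem QSharp_data_processing
    {n m : Type*} [Fintype n] [DecidableEq n] [Fintype m] [DecidableEq m]
    (α : ℝ) (hα : 1 < α)
    (ρ σ : Matrix n n ℂ) (hρ : ρ.PosSemidef) (hσ : σ.PosDef)
    (Φ : Matrix n n ℂ →ₗ[ℂ] Matrix m m ℂ)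
    (hΦpos : ∀ C : Matrix n n ℂ, C.PosSemidef → (Φ C).PosSemidef)
    (hΦtp : ∀ W : Matrix n n ℂ, (Φ W).trace = W.trace)
    (hΦσ : (Φ σ).PosDef) :
    QSharp α (Φ ρ) (Φ σ) ≤ QSharp α ρ σ ∧
    DSharp α (Φ ρ) (Φ σ) ≤ DSharp α ρ σ := by
  have hα0 : 0 < α := by linarith
  have hβ : 1 / α ∈ Set.Ioo (0 : ℝ) 1 :=
    ⟨by positivity, by rw [div_lt_one hα0]; exact hα⟩
  have hQ : QSharp α (Φ ρ) (Φ σ) ≤ QSharp α ρ σ := by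
    refine csInf_le_csInf (QSharpAux.bddBelow_set _ _ _)
      (QSharpAux.nonempty_set α hα0 ρ σ hρ hσ) ?_
    rintro t ⟨A, hA, hle, rfl⟩
    refine ⟨Φ A, hΦpos A hA, ?_, by rw [hΦtp]⟩
    have h1 := QSharpAux.gmean_map hσ hA Φ hΦpos hΦσ (1 / α) hβ
    have h2 := hΦpos _ hle
    have h3 := h1.add h2
    rwa [map_sub, sub_add_sub_cancel] at h3
  refine ⟨hQ, ?_⟩
  by_cases h0 : ρ = 0
  · subst h0
    unfold DSharp
    rw [map_zero, QSharpAux.QSharp_zero α _ hΦσ, QSharpAux.QSharp_zero α _ hσ]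
  · have htr : 0 < ρ.trace.re := by
      refine lt_of_le_of_ne (QSharpAux.trace_re_nonneg hρ) fun h => h0 ?_
      refine hρ.trace_eq_zero_iff.mp ?_
      have := hρ.trace_nonneg
      rw [Complex.le_def] at this
      exact Complex.ext h.symm this.2.symm
    have hpos := QSharpAux.QSharp_pos α hα (Φ ρ) (Φ σ) (hΦpos _ hρ) hΦσ (by rwa [hΦtp])
    unfold DSharp
    refine mul_le_mul_of_nonneg_left ?_ (by
      have : 0 < α - 1 := by linarith
      positivity)
    exact Real.logb_le_logb_of_le (by norm_num) hpos hQ
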